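/- Let α,β > −1/2 and let c⁽¹⁾ > 0 be fixed. Then there exists a constant C > 0 depending only on α,β (and c⁽¹⁾) such that for every positive integer L: (i) |v_L^{(α,β)}(1,cos θ)| ≤ C L^{2α+2} for all θ with 0 ≤ θ ≤ c⁽¹⁾/L, and (ii) |v_L^{(α,β)}(1,cos θ)| ≤ C L^{α+β+1} for all θ with π − c⁽¹⁾/L ≤ θ ≤ π. -/

import Mathlib

open MeasureTheory Real
open scoped ENNReal NNReal

/-- The classical Jacobi polynomial `P_n^{(a,b)}` (hypergeometric representation,
normalised so that `P_n^{(a,b)}(1) = Γ(n+a+1)/(Γ(n+1)Γ(a+1))`). -/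
noncomputable def jacobiP (a b : ℝ) (n : ℕ) (x : ℝ) : ℝ :=
  ∑ s ∈ Finset.range (n + 1),
    (Real.Gamma ((n : ℝ) + a + 1) /
        (Real.Gamma ((s : ℝ) + a + 1) * (Nat.factorial (n - s) : ℝ))) *
      (Real.Gamma ((n : ℝ) + b + 1) /
        (Real.Gamma ((n : ℝ) - (s : ℝ) + b + 1) * (Nat.factorial s : ℝ))) *
      ((x - 1) / 2) ^ s * ((x + 1) / 2) ^ (n - s)

/-- `M_ℓ^{(a,b)}`, the `L₂(w_{a,b})` normalisation constant of `P_ℓ^{(a,b)}`. -/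
noncomputable def jacobiM (a b : ℝ) (ℓ : ℕ) : ℝ :=
  (2 : ℝ) ^ (a + b + 1) / (2 * (ℓ : ℝ) + a + b + 1) *
    (Real.Gamma ((ℓ : ℝ) + a + 1) * Real.Gamma ((ℓ : ℝ) + b + 1)) /
    (Real.Gamma ((ℓ : ℝ) + 1) * Real.Gamma ((ℓ : ℝ) + a + b + 1))

/-- The generalised Dirichlet kernel
`v_L^{(a,b)}(t,s) = Σ_{ℓ=0}^{L} (M_ℓ^{(a,b)})⁻¹ P_ℓ^{(a,b)}(t) P_ℓ^{(a,b)}(s)`. -/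
noncomputable def dirichletJ (a b : ℝ) (L : ℕ) (t s : ℝ) : ℝ :=
  ∑ ℓ ∈ Finset.range (L + 1), (jacobiM a b ℓ)⁻¹ * jacobiP a b ℓ t * jacobiP a b ℓ s

/-- The filtered Jacobi kernel
`v_{L,g}^{(a,b)}(t,s) = Σ_{ℓ=0}^{2L−1} g(ℓ/L) (M_ℓ^{(a,b)})⁻¹ P_ℓ^{(a,b)}(t) P_ℓ^{(a,b)}(s)`. -/
noncomputable def filteredJ (a b : ℝ) (g : ℝ → ℝ) (L : ℕ) (t s : ℝ) : ℝ :=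
  ∑ ℓ ∈ Finset.range (2 * L),
    g ((ℓ : ℝ) / (L : ℝ)) * (jacobiM a b ℓ)⁻¹ * jacobiP a b ℓ t * jacobiP a b ℓ s

/-- `Z(d,ℓ)`, the dimension of the space of spherical harmonics of degree `ℓ` on `S^d`. -/
noncomputable def Zdim (d ℓ : ℕ) : ℝ :=
  (2 * (ℓ : ℝ) + (d : ℝ) - 1) * Real.Gamma ((ℓ : ℝ) + (d : ℝ) - 1) /
    (Real.Gamma (d : ℝ) * Real.Gamma ((ℓ : ℝ) + 1))

/-- The normalised Legendre polynomial `P_ℓ^{(d+1)}` for `S^d`. -/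
noncomputable def normLegendre (d ℓ : ℕ) (t : ℝ) : ℝ :=
  jacobiP (((d : ℝ) - 2) / 2) (((d : ℝ) - 2) / 2) ℓ t /
    jacobiP (((d : ℝ) - 2) / 2) (((d : ℝ) - 2) / 2) ℓ 1

/-- The Dirichlet kernel on `S^d`: `v_L^{(d)}(t) = Σ_{ℓ=0}^L Z(d,ℓ) P_ℓ^{(d+1)}(t)`. -/
noncomputable def sphDirichlet (d L : ℕ) (t : ℝ) : ℝ :=
  ∑ ℓ ∈ Finset.range (L + 1), Zdim d ℓ * normLegendre d ℓ t

/-- The filtered kernel on `S^d`: `v_{L,g}^{(d)}(t) = Σ_{ℓ=0}^∞ g(ℓ/L) Z(d,ℓ) P_ℓ^{(d+1)}(t)`. -/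
noncomputable def sphFiltered (d : ℕ) (g : ℝ → ℝ) (L : ℕ) (t : ℝ) : ℝ :=
  ∑' ℓ : ℕ, g ((ℓ : ℝ) / (L : ℝ)) * Zdim d ℓ * normLegendre d ℓ t

/-- The surface area `|S^n| = 2π^{(n+1)/2}/Γ((n+1)/2)` of the unit sphere `S^n`. -/
noncomputable def sphereArea (n : ℕ) : ℝ :=
  2 * Real.pi ^ (((n : ℝ) + 1) / 2) / Real.Gamma (((n : ℝ) + 1) / 2)

/-- `m_{a,b}(θ) = π^{−1/2} (sin(θ/2))^{−a−1/2} (cos(θ/2))^{−b−1/2}`. -/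
noncomputable def mAB (a b θ : ℝ) : ℝ :=
  Real.pi ^ (-(1 / 2 : ℝ)) * Real.sin (θ / 2) ^ (-a - 1 / 2) *
    Real.cos (θ / 2) ^ (-b - 1 / 2)

/-- `ω_γ(z) = z − γπ/2 − π/4`. -/
noncomputable def omegaA (γ z : ℝ) : ℝ := z - γ * Real.pi / 2 - Real.pi / 4

/-- Coefficients of the Jacobi polynomial. -/
noncomputable def jCoef (a b : ℝ) (n s : ℕ) : ℝ :=
    (Real.Gamma ((n : ℝ) + a + 1) /
        (Real.Gamma ((s : ℝ) + a + 1) * (Nat.factorial (n - s) : ℝ))) *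
      (Real.Gamma ((n : ℝ) + b + 1) /
        (Real.Gamma ((n : ℝ) - (s : ℝ) + b + 1) * (Nat.factorial s : ℝ)))

lemma jacobiP_eq (a b : ℝ) (n : ℕ) (x : ℝ) :
    jacobiP a b n x = ∑ s ∈ Finset.range (n + 1),
      jCoef a b n s * ((x - 1) / 2) ^ s * ((x + 1) / 2) ^ (n - s) := rfl

lemma Gamma_step (z w : ℝ) (hz : 0 < z) (h : w = z + 1) : Real.Gamma w = z * Real.Gamma z := by
  rw [h, Real.Gamma_add_one hz.ne']

lemma coef_A (a b : ℝ) (ha : -1 < a) (hb : -1 < b) (n s : ℕ) (hs : s ≤ n) :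
    (2 * (n : ℝ) + a + b + 1) * jCoef a b n s - ((n : ℝ) + a + b + 1) * jCoef (a + 1) b n s
      = -(((n : ℝ) + b - s) * (n - s) / (a + 1 + s)) * jCoef a b n s + s * jCoef a b n s := by
  obtain ⟨m, rfl⟩ := Nat.exists_eq_add_of_le hs
  have hs0 : (0 : ℝ) ≤ s := Nat.cast_nonneg s
  have hm0 : (0 : ℝ) ≤ m := Nat.cast_nonneg m
  have key : jCoef (a + 1) b (s + m) s
      = ((s : ℝ) + m + a + 1) / (a + 1 + s) * jCoef a b (s + m) s := by
    unfold jCoef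
    push_cast
    rw [Gamma_step ((s : ℝ) + m + a + 1) ((s : ℝ) + m + (a + 1) + 1) (by linarith) (by ring),
      Gamma_step ((s : ℝ) + a + 1) ((s : ℝ) + (a + 1) + 1) (by linarith) (by ring)]
    have h1 : (s : ℝ) + a + 1 ≠ 0 := by linarith
    have h2 : a + 1 + (s : ℝ) ≠ 0 := by linarith
    have h3 := (Real.Gamma_pos_of_pos (show 0 < (s : ℝ) + a + 1 by linarith)).ne'
    have h4 := (Real.Gamma_pos_of_pos (show 0 < (s : ℝ) + m - s + b + 1 by linarith)).ne'
    have h5 : (a + 1 + (s : ℝ)) = s + a + 1 := by ring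
    rw [h5]
    field_simp
  rw [key]
  have h2 : a + 1 + (s : ℝ) ≠ 0 := by linarith
  push_cast
  field_simp
  ring

lemma coef_f (a b : ℝ) (ha : -1 < a) (hb : -1 < b) (n s : ℕ) (hs : s ≤ n) :
    (((n + 1 : ℕ) : ℝ) + b - s) * ((n + 1 : ℕ) - s) / (a + 1 + s) * jCoef a b (n + 1) s
      = ((n : ℝ) + 1 + b) * jCoef (a + 1) b n s := by
  obtain ⟨m, rfl⟩ := Nat.exists_eq_add_of_le hs
  have hs0 : (0 : ℝ) ≤ s := Nat.cast_nonneg s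
  have hm0 : (0 : ℝ) ≤ m := Nat.cast_nonneg m
  unfold jCoef
  have e1 : s + m + 1 - s = m + 1 := by omega
  have e2 : s + m - s = m := by omega
  rw [e1, e2, Nat.factorial_succ]
  push_cast
  rw [Gamma_step ((s : ℝ) + m + b + 1) ((s : ℝ) + m + 1 + b + 1) (by linarith) (by ring),
    Gamma_step ((s : ℝ) + a + 1) ((s : ℝ) + (a + 1) + 1) (by linarith) (by ring),
    Gamma_step ((m : ℝ) + b + 1) ((s : ℝ) + m + 1 - s + b + 1) (by linarith) (by ring)]
  rw [show (s : ℝ) + m - s + b + 1 = m + b + 1 by ring,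
    show (s : ℝ) + m + 1 + a + 1 = s + m + (a + 1) + 1 by ring,
    show (s : ℝ) + m + 1 + b - s = m + b + 1 by ring,
    show (s : ℝ) + m + 1 - s = m + 1 by ring,
    show a + 1 + (s : ℝ) = s + a + 1 by ring]
  have h1 : (s : ℝ) + a + 1 ≠ 0 := by linarith
  have h2 : (m : ℝ) + b + 1 ≠ 0 := by linarith
  have h3 := (Real.Gamma_pos_of_pos (show 0 < (s : ℝ) + a + 1 by linarith)).ne'
  have h4 := (Real.Gamma_pos_of_pos (show 0 < (m : ℝ) + b + 1 by linarith)).ne'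
  have h5 : (m : ℝ) + 1 ≠ 0 := by linarith
  have h6 : (m.factorial : ℝ) ≠ 0 := by positivity
  field_simp
  ring

lemma coef_g (a b : ℝ) (ha : -1 < a) (hb : -1 < b) (n s : ℕ) (hs : s ≤ n) :
    ((s + 1 : ℕ) : ℝ) * jCoef a b (n + 1) (s + 1)
      = ((n : ℝ) + 1 + b) * jCoef (a + 1) b n s := by
  obtain ⟨m, rfl⟩ := Nat.exists_eq_add_of_le hs
  have hs0 : (0 : ℝ) ≤ s := Nat.cast_nonneg s
  have hm0 : (0 : ℝ) ≤ m := Nat.cast_nonneg m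
  unfold jCoef
  have e1 : s + m + 1 - (s + 1) = m := by omega
  have e2 : s + m - s = m := by omega
  rw [e1, e2, Nat.factorial_succ]
  push_cast
  rw [Gamma_step ((s : ℝ) + m + b + 1) ((s : ℝ) + m + 1 + b + 1) (by linarith) (by ring)]
  rw [show (s : ℝ) + m - s + b + 1 = m + b + 1 by ring,
    show (s : ℝ) + m + 1 + a + 1 = s + m + (a + 1) + 1 by ring,
    show (s : ℝ) + m + 1 - (s + 1) + b + 1 = m + b + 1 by ring,
    show (s : ℝ) + 1 + a + 1 = s + (a + 1) + 1 by ring]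
  have h3 := (Real.Gamma_pos_of_pos (show 0 < (s : ℝ) + (a + 1) + 1 by linarith)).ne'
  have h4 := (Real.Gamma_pos_of_pos (show 0 < (m : ℝ) + b + 1 by linarith)).ne'
  have h5 : (s : ℝ) + 1 ≠ 0 := by linarith
  have h6 : (m.factorial : ℝ) ≠ 0 := by positivity
  field_simp
  ring

lemma jacobi_rec (a b : ℝ) (ha : -1 < a) (hb : -1 < b) (n : ℕ) (x : ℝ) :
    (2 * ((n : ℝ) + 1) + a + b + 1) * jacobiP a b (n + 1) x
      = ((n : ℝ) + 1 + a + b + 1) * jacobiP (a + 1) b (n + 1) x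
        - ((n : ℝ) + 1 + b) * jacobiP (a + 1) b n x := by
  have hwu : jacobiP (a + 1) b n x = jacobiP (a + 1) b n x * ((x + 1) / 2)
      - jacobiP (a + 1) b n x * ((x - 1) / 2) := by ring
  rw [hwu]
  simp only [jacobiP_eq]
  generalize (x + 1) / 2 = w
  generalize (x - 1) / 2 = u
  have main : ∑ s ∈ Finset.range (n + 1 + 1), ((2 * ((n : ℝ) + 1) + a + b + 1) * jCoef a b (n + 1) s
      - ((n : ℝ) + 1 + a + b + 1) * jCoef (a + 1) b (n + 1) s) * (u ^ s * w ^ (n + 1 - s))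
      = -∑ s ∈ Finset.range (n + 1), ((n : ℝ) + 1 + b) * jCoef (a + 1) b n s * u ^ s * w ^ (n - s) * w
       + ∑ s ∈ Finset.range (n + 1), ((n : ℝ) + 1 + b) * jCoef (a + 1) b n s * u ^ s * w ^ (n - s) * u := by
    have h1 : ∀ s ∈ Finset.range (n + 1 + 1), ((2 * ((n : ℝ) + 1) + a + b + 1) * jCoef a b (n + 1) s
      - ((n : ℝ) + 1 + a + b + 1) * jCoef (a + 1) b (n + 1) s) * (u ^ s * w ^ (n + 1 - s))
      = -((((n + 1 : ℕ) : ℝ) + b - s) * ((n + 1 : ℕ) - s) / (a + 1 + s) * jCoef a b (n + 1) s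
          * (u ^ s * w ^ (n + 1 - s)))
        + (s : ℝ) * jCoef a b (n + 1) s * (u ^ s * w ^ (n + 1 - s)) := by
      intro s hs
      have := coef_A a b ha hb (n + 1) s (by simpa [Nat.lt_succ_iff] using hs)
      push_cast at this ⊢
      rw [this]
      ring
    rw [Finset.sum_congr rfl h1, Finset.sum_add_distrib, Finset.sum_neg_distrib]
    congr 1
    · congr 1
      rw [Finset.sum_range_succ]
      simp only [sub_self, mul_zero, zero_div, zero_mul, add_zero]
      refine Finset.sum_congr rfl fun s hs => ?_
      have hs' : s ≤ n := by simpa [Nat.lt_succ_iff] using hs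
      rw [coef_f a b ha hb n s hs', show n + 1 - s = (n - s) + 1 by omega]
      ring
    · rw [Finset.sum_range_succ']
      simp only [Nat.cast_zero, zero_mul, add_zero]
      refine Finset.sum_congr rfl fun s hs => ?_
      have hs' : s ≤ n := by simpa [Nat.lt_succ_iff] using hs
      rw [coef_g a b ha hb n s hs', show n + 1 - (s + 1) = (n - s) by omega]
      ring
  have e1 : ∀ (c d : ℝ) (k : ℕ) (f g h : ℕ → ℝ), c * ∑ s ∈ Finset.range k, f s * u ^ s * h s
      - d * ∑ s ∈ Finset.range k, g s * u ^ s * h s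
      = ∑ s ∈ Finset.range k, (c * f s - d * g s) * (u ^ s * h s) := by
    intro c d k f g h
    rw [Finset.mul_sum, Finset.mul_sum, ← Finset.sum_sub_distrib]
    exact Finset.sum_congr rfl fun s _ => by ring
  have e2 := e1 (2 * ((n : ℝ) + 1) + a + b + 1) ((n : ℝ) + 1 + a + b + 1) (n + 1 + 1)
    (jCoef a b (n + 1)) (jCoef (a + 1) b (n + 1)) (fun s => w ^ (n + 1 - s))
  have e3 : ∀ z : ℝ, ∑ s ∈ Finset.range (n + 1),
      ((n : ℝ) + 1 + b) * jCoef (a + 1) b n s * u ^ s * w ^ (n - s) * z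
      = ((n : ℝ) + 1 + b) * ((∑ s ∈ Finset.range (n + 1),
        jCoef (a + 1) b n s * u ^ s * w ^ (n - s)) * z) := by
    intro z
    rw [Finset.sum_mul, Finset.mul_sum]
    exact Finset.sum_congr rfl fun s _ => by ring
  rw [e3, e3] at main
  linarith [e2, main]

lemma jacobiP_one (a b : ℝ) (hb : -1 < b) (n : ℕ) :
    jacobiP a b n 1 = Real.Gamma ((n : ℝ) + a + 1) / (Real.Gamma (a + 1) * (n.factorial : ℝ)) := by
  rw [jacobiP_eq, Finset.sum_range_succ']
  have hn : (0 : ℝ) ≤ n := Nat.cast_nonneg n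
  have h4 := (Real.Gamma_pos_of_pos (show 0 < (n : ℝ) + b + 1 by linarith)).ne'
  simp [jCoef, h4]

lemma dirichlet_closed (a b : ℝ) (ha : -(1 / 2 : ℝ) < a) (hb : -(1 / 2 : ℝ) < b) (L : ℕ) (x : ℝ) :
    dirichletJ a b L 1 x = ((2 : ℝ) ^ (a + b + 1))⁻¹ * (Real.Gamma ((L : ℝ) + a + b + 2) /
      (Real.Gamma (a + 1) * Real.Gamma ((L : ℝ) + b + 1))) * jacobiP (a + 1) b L x := by
  have h2 : (2 : ℝ) ^ (a + b + 1) ≠ 0 := (Real.rpow_pos_of_pos (by norm_num) _).ne'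
  have hA := (Real.Gamma_pos_of_pos (show 0 < a + 1 by linarith)).ne'
  induction L with
  | zero =>
    have hA2 := (Real.Gamma_pos_of_pos (show 0 < a + 1 + 1 by linarith)).ne'
    have hB := (Real.Gamma_pos_of_pos (show 0 < b + 1 by linarith)).ne'
    have hAB := (Real.Gamma_pos_of_pos (show 0 < a + b + 1 by linarith)).ne'
    have h0 : a + b + 1 ≠ 0 := by linarith
    simp only [dirichletJ, jacobiP, jacobiM, zero_add, Finset.sum_range_one]
    simp only [Nat.cast_zero, zero_add, Nat.sub_self, Nat.factorial_zero, pow_zero, mul_zero,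
      Nat.cast_one, mul_one, sub_zero, Real.Gamma_one, one_mul]
    rw [Gamma_step (a + b + 1) (a + b + 2) (by linarith) (by ring)]
    field_simp
  | succ n ih =>
    have hn : (0 : ℝ) ≤ n := Nat.cast_nonneg n
    have hrec := jacobi_rec a b (by linarith) (by linarith) n x
    have : dirichletJ a b (n + 1) 1 x = dirichletJ a b n 1 x
        + (jacobiM a b (n + 1))⁻¹ * jacobiP a b (n + 1) 1 * jacobiP a b (n + 1) x := by
      unfold dirichletJ
      rw [Finset.sum_range_succ]
    rw [this, ih, jacobiP_one a b (by linarith)]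
    have hz : 2 * ((n : ℝ) + 1) + a + b + 1 ≠ 0 := by linarith
    have hP : jacobiP a b (n + 1) x = (((n : ℝ) + 1 + a + b + 1) * jacobiP (a + 1) b (n + 1) x
        - ((n : ℝ) + 1 + b) * jacobiP (a + 1) b n x) / (2 * ((n : ℝ) + 1) + a + b + 1) := by
      rw [eq_div_iff hz, ← hrec]; ring
    rw [hP]
    unfold jacobiM
    push_cast
    have hf : Real.Gamma ((n : ℝ) + 1 + 1) = ((n + 1).factorial : ℝ) := by
      have := Real.Gamma_nat_eq_factorial (n + 1)
      push_cast at this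
      exact this
    rw [hf, Gamma_step ((n : ℝ) + a + b + 2) ((n : ℝ) + 1 + a + b + 2) (by linarith) (by ring),
      Gamma_step ((n : ℝ) + b + 1) ((n : ℝ) + 1 + b + 1) (by linarith) (by ring),
      show (n : ℝ) + 1 + a + b + 1 = n + a + b + 2 by ring]
    have g1 := (Real.Gamma_pos_of_pos (show 0 < (n : ℝ) + a + b + 2 by linarith)).ne'
    have g2 := (Real.Gamma_pos_of_pos (show 0 < (n : ℝ) + b + 1 by linarith)).ne'
    have g3 := (Real.Gamma_pos_of_pos (show 0 < (n : ℝ) + 1 + a + 1 by linarith)).ne'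
    have g4 : (n : ℝ) + b + 1 ≠ 0 := by linarith
    have g5 : ((n + 1).factorial : ℝ) ≠ 0 := by positivity
    generalize jacobiP (a + 1) b (n + 1) x = p
    generalize jacobiP (a + 1) b n x = q
    field_simp
    ring

lemma jacobiP_neg (a b : ℝ) (n : ℕ) (x : ℝ) :
    jacobiP a b n (-x) = (-1) ^ n * jacobiP b a n x := by
  unfold jacobiP
  rw [← Finset.sum_range_reflect, Finset.mul_sum]
  refine Finset.sum_congr rfl fun s hs => ?_
  have hs' : s ≤ n := by simpa [Nat.lt_succ_iff] using hs
  obtain ⟨m, rfl⟩ := Nat.exists_eq_add_of_le hs'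
  rw [show s + m + 1 - 1 - s = m by omega, show s + m - m = s by omega,
    show s + m - s = m by omega, show (-x - 1) / 2 = -((x + 1) / 2) by ring,
    show (-x + 1) / 2 = -((x - 1) / 2) by ring, neg_pow ((x + 1) / 2), neg_pow ((x - 1) / 2)]
  push_cast
  rw [show (s : ℝ) + m - m + b + 1 = s + b + 1 by ring,
    show (s : ℝ) + m - s + a + 1 = m + a + 1 by ring]
  ring

lemma Gamma_lower (a : ℝ) (ha : -(1 / 2 : ℝ) < a) (s : ℕ) :
    Real.Gamma (a + 1) ≤ 2 ^ s * Real.Gamma ((s : ℝ) + a + 1) := by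
  induction s with
  | zero => simp
  | succ s ih =>
    have hs0 : (0 : ℝ) ≤ s := Nat.cast_nonneg s
    have h3 := (Real.Gamma_pos_of_pos (show 0 < (s : ℝ) + a + 1 by linarith))
    push_cast
    rw [Gamma_step ((s : ℝ) + a + 1) ((s : ℝ) + 1 + a + 1) (by linarith) (by ring), pow_succ]
    have : 0 ≤ (2 : ℝ) ^ s * Real.Gamma ((s : ℝ) + a + 1) := by positivity
    nlinarith

lemma Gamma_desc (b : ℝ) (hb : -(1 / 2 : ℝ) < b) (m s : ℕ) :
    Real.Gamma ((m : ℝ) + s + b + 1) ≤ ((m : ℝ) + s + |b|) ^ s * Real.Gamma ((m : ℝ) + b + 1) := by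
  induction s with
  | zero => simp
  | succ s ih =>
    have hs0 : (0 : ℝ) ≤ s := Nat.cast_nonneg s
    have hm0 : (0 : ℝ) ≤ m := Nat.cast_nonneg m
    have h3 := (Real.Gamma_pos_of_pos (show 0 < (m : ℝ) + b + 1 by linarith))
    have hb' := le_abs_self b
    have hb0 := abs_nonneg b
    push_cast
    rw [Gamma_step ((m : ℝ) + s + b + 1) ((m : ℝ) + (s + 1) + b + 1) (by linarith) (by ring),
      pow_succ']
    calc _ ≤ ((m : ℝ) + (s + 1) + |b|) *
          (((m : ℝ) + s + |b|) ^ s * Real.Gamma ((m : ℝ) + b + 1)) := by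
          refine mul_le_mul (by linarith) ih (Real.Gamma_pos_of_pos (by linarith)).le (by linarith)
      _ ≤ ((m : ℝ) + (s + 1) + |b|) *
          (((m : ℝ) + (s + 1) + |b|) ^ s * Real.Gamma ((m : ℝ) + b + 1)) := by
          gcongr
          linarith
      _ = _ := by ring

lemma fact_desc (m s : ℕ) :
    ((m + s).factorial : ℝ) ≤ ((m : ℝ) + s) ^ s * (m.factorial : ℝ) := by
  have h := Gamma_desc 0 (by norm_num) m s
  simp only [abs_zero, add_zero] at h
  have h1 := Real.Gamma_nat_eq_factorial (m + s)
  push_cast at h1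
  rw [h1, Real.Gamma_nat_eq_factorial] at h
  exact h

lemma jCoef_le (a b : ℝ) (ha : -(1 / 2 : ℝ) < a) (hb : -(1 / 2 : ℝ) < b) (n s : ℕ) (hs : s ≤ n) :
    |jCoef a b n s| ≤ Real.Gamma ((n : ℝ) + a + 1) / (n.factorial * Real.Gamma (a + 1)) *
      ((2 * n * (n + |b|)) ^ s / s.factorial) := by
  obtain ⟨m, rfl⟩ := Nat.exists_eq_add_of_le' hs
  have hs0 : (0 : ℝ) ≤ s := Nat.cast_nonneg s
  have hm0 : (0 : ℝ) ≤ m := Nat.cast_nonneg m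
  have A := Gamma_lower a ha s
  have B := Gamma_desc b hb m s
  have F := fact_desc m s
  unfold jCoef
  rw [show m + s - s = m by omega]
  push_cast
  rw [show (m : ℝ) + s - s + b + 1 = m + b + 1 by ring]
  have g1 := (Real.Gamma_pos_of_pos (show 0 < (m : ℝ) + s + a + 1 by linarith))
  have g2 := (Real.Gamma_pos_of_pos (show 0 < (m : ℝ) + b + 1 by linarith))
  have g3 := (Real.Gamma_pos_of_pos (show 0 < (s : ℝ) + a + 1 by linarith))
  have g4 := (Real.Gamma_pos_of_pos (show 0 < (m : ℝ) + s + b + 1 by linarith))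
  have g5 := (Real.Gamma_pos_of_pos (show 0 < a + 1 by linarith))
  have f1 : (0 : ℝ) < m.factorial := by positivity
  have f2 : (0 : ℝ) < s.factorial := by positivity
  have f3 : (0 : ℝ) < (m + s).factorial := by positivity
  rw [abs_of_pos (by positivity), mul_pow, mul_pow]
  have X1 : Real.Gamma ((m : ℝ) + s + b + 1) / Real.Gamma ((m : ℝ) + b + 1)
      ≤ ((m : ℝ) + s + |b|) ^ s := by rwa [div_le_iff₀ g2]
  have X2 : ((m + s).factorial : ℝ) / m.factorial ≤ ((m : ℝ) + s) ^ s := by rwa [div_le_iff₀ f1]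
  have X3 : Real.Gamma (a + 1) / Real.Gamma ((s : ℝ) + a + 1) ≤ 2 ^ s := by rwa [div_le_iff₀ g3]
  calc _ = Real.Gamma ((m : ℝ) + s + a + 1) / ((m + s).factorial * Real.Gamma (a + 1)) *
      (((Real.Gamma (a + 1) / Real.Gamma ((s : ℝ) + a + 1)) *
        (((m + s).factorial : ℝ) / m.factorial) *
        (Real.Gamma ((m : ℝ) + s + b + 1) / Real.Gamma ((m : ℝ) + b + 1))) / s.factorial) := by
        field_simp
    _ ≤ _ := by gcongr

lemma jacobiP_bound (a b : ℝ) (ha : -(1 / 2 : ℝ) < a) (hb : -(1 / 2 : ℝ) < b) (c : ℝ)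
    (n : ℕ) (hn : 1 ≤ n) (θ : ℝ) (h0 : 0 ≤ θ) (h1 : θ ≤ c / n) :
    |jacobiP a b n (Real.cos θ)| ≤ Real.Gamma ((n : ℝ) + a + 1) /
      (n.factorial * Real.Gamma (a + 1)) * Real.exp ((1 + |b|) * c ^ 2 / 2) := by
  have hn' : (1 : ℝ) ≤ n := by exact_mod_cast hn
  have hnp : (0 : ℝ) < n := by linarith
  have hb0 := abs_nonneg b
  rw [jacobiP_eq]
  have g1 := (Real.Gamma_pos_of_pos (show 0 < (n : ℝ) + a + 1 by linarith))
  have g5 := (Real.Gamma_pos_of_pos (show 0 < a + 1 by linarith))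
  set G := Real.Gamma ((n : ℝ) + a + 1) / (n.factorial * Real.Gamma (a + 1)) with hG
  have hGp : 0 ≤ G := by positivity
  set K := (1 + |b|) * c ^ 2 / 2 with hK
  have hKp : 0 ≤ K := by positivity
  have hu : |(Real.cos θ - 1) / 2| ≤ (c / n) ^ 2 / 4 := by
    have := Real.one_sub_sq_div_two_le_cos (x := θ)
    have h2 := Real.cos_le_one θ
    have h3 : θ ^ 2 ≤ (c / n) ^ 2 := by gcongr
    rw [abs_le]
    constructor <;> nlinarith
  have hw : |(Real.cos θ + 1) / 2| ≤ 1 := by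
    rw [abs_le]
    constructor <;> linarith [Real.cos_le_one θ, Real.neg_one_le_cos θ]
  calc _ ≤ ∑ s ∈ Finset.range (n + 1),
        |jCoef a b n s * ((Real.cos θ - 1) / 2) ^ s * ((Real.cos θ + 1) / 2) ^ (n - s)| :=
        Finset.abs_sum_le_sum_abs _ _
    _ ≤ ∑ s ∈ Finset.range (n + 1), G * (K ^ s / s.factorial) := by
        refine Finset.sum_le_sum fun s hs => ?_
        have hs' : s ≤ n := by simpa [Nat.lt_succ_iff] using hs
        have hj := jCoef_le a b ha hb n s hs'
        rw [abs_mul, abs_mul, abs_pow, abs_pow]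
        have hw' : |(Real.cos θ + 1) / 2| ^ (n - s) ≤ 1 := pow_le_one₀ (abs_nonneg _) hw
        calc _ ≤ (G * ((2 * n * (n + |b|)) ^ s / s.factorial)) * ((c / n) ^ 2 / 4) ^ s * 1 := by
              gcongr
          _ = G * ((2 * n * (n + |b|) * ((c / n) ^ 2 / 4)) ^ s / s.factorial) := by
              rw [mul_pow (2 * (n : ℝ) * (n + |b|))]; ring
          _ ≤ _ := by
              gcongr
              have e : 2 * (n : ℝ) * (n + |b|) * ((c / n) ^ 2 / 4) = (1 + |b| / n) * c ^ 2 / 2 := by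
                field_simp
                ring
              rw [e, hK]
              have : |b| / n ≤ |b| := div_le_self hb0 hn'
              gcongr
    _ = G * ∑ s ∈ Finset.range (n + 1), K ^ s / s.factorial := by rw [Finset.mul_sum]
    _ ≤ _ := by
        gcongr
        exact Real.sum_le_exp_of_nonneg hKp _

lemma Gamma_tendsto (s : ℝ) (hs : -1 < s) :
    Filter.Tendsto (fun n : ℕ => Real.Gamma ((n : ℝ) + s + 1) / ((n : ℝ) ^ s * n.factorial))
      Filter.atTop (nhds 1) := by
  by_cases h0 : s = 0
  · subst h0
    have : (fun n : ℕ => Real.Gamma ((n : ℝ) + 0 + 1) / ((n : ℝ) ^ (0 : ℝ) * n.factorial))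
        = fun _ => 1 := by
      funext n
      have f1 : (n.factorial : ℝ) ≠ 0 := by positivity
      rw [add_zero, Real.Gamma_nat_eq_factorial]
      simp [f1]
    rw [this]
    exact tendsto_const_nhds
  have hne : ∀ m : ℕ, s ≠ -m := by
    intro m hm
    rcases m with _ | m
    · simp at hm; exact h0 hm
    · push_cast at hm
      have : (0 : ℝ) ≤ m := Nat.cast_nonneg m
      linarith
  have hG : Real.Gamma s ≠ 0 := Real.Gamma_ne_zero hne
  have hprod : ∀ n : ℕ, Real.Gamma ((n : ℝ) + s + 1)
      = Real.Gamma s * ∏ j ∈ Finset.range (n + 1), (s + j) := by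
    intro n
    induction n with
    | zero => simp [Real.Gamma_add_one h0, mul_comm]
    | succ n ih =>
      have hn : (0 : ℝ) ≤ n := Nat.cast_nonneg n
      rw [Finset.prod_range_succ, ← mul_assoc, ← ih]
      push_cast
      rw [Gamma_step ((n : ℝ) + s + 1) ((n : ℝ) + 1 + s + 1) (by linarith) (by ring)]
      ring
  have ht := (Real.GammaSeq_tendsto_Gamma s).inv₀ hG |>.const_mul (Real.Gamma s)
  rw [mul_inv_cancel₀ hG] at ht
  refine ht.congr fun n => ?_
  rw [hprod, Real.GammaSeq, inv_div, mul_div_assoc]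

lemma Gamma_ratio (p q : ℝ) (hp : -1 < p) (hq : -1 < q) :
    ∃ C : ℝ, 0 < C ∧ ∀ n : ℕ, 1 ≤ n →
      Real.Gamma ((n : ℝ) + p + 1) / Real.Gamma ((n : ℝ) + q + 1) ≤ C * (n : ℝ) ^ (p - q) := by
  have ht := (Gamma_tendsto p hp).div (Gamma_tendsto q hq) one_ne_zero
  obtain ⟨C, hC⟩ := ht.bddAbove_range
  refine ⟨max C 1, by positivity, fun n hn => ?_⟩
  have hn' : (0 : ℝ) < n := by exact_mod_cast hn
  have h := hC ⟨n, rfl⟩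
  simp only [Pi.div_apply] at h
  have r1 := Real.rpow_pos_of_pos hn' p
  have r2 := Real.rpow_pos_of_pos hn' q
  have g1 := (Real.Gamma_pos_of_pos (show 0 < (n : ℝ) + p + 1 by linarith))
  have g2 := (Real.Gamma_pos_of_pos (show 0 < (n : ℝ) + q + 1 by linarith))
  have f1 : (0 : ℝ) < n.factorial := by positivity
  rw [Real.rpow_sub hn']
  have e : Real.Gamma ((n : ℝ) + p + 1) / Real.Gamma ((n : ℝ) + q + 1)
      = (Real.Gamma ((n : ℝ) + p + 1) / ((n : ℝ) ^ p * n.factorial)) /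
        (Real.Gamma ((n : ℝ) + q + 1) / ((n : ℝ) ^ q * n.factorial)) *
          ((n : ℝ) ^ p / (n : ℝ) ^ q) := by
    field_simp
  rw [e]
  gcongr
  exact h.trans (le_max_left _ _)

lemma jacobiP_bound' (a b : ℝ) (ha : -(1 / 2 : ℝ) < a) (hb : -(1 / 2 : ℝ) < b) (c : ℝ) :
    ∃ C : ℝ, 0 < C ∧ ∀ n : ℕ, 1 ≤ n → ∀ θ : ℝ, 0 ≤ θ → θ ≤ c / n →
      |jacobiP a b n (Real.cos θ)| ≤ C * (n : ℝ) ^ a := by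
  obtain ⟨C, hC, h⟩ := Gamma_ratio a 0 (by linarith) (by norm_num)
  have g5 := (Real.Gamma_pos_of_pos (show 0 < a + 1 by linarith))
  refine ⟨C / Real.Gamma (a + 1) * Real.exp ((1 + |b|) * c ^ 2 / 2), by positivity,
    fun n hn θ h0 h1 => (jacobiP_bound a b ha hb c n hn θ h0 h1).trans ?_⟩
  have := h n hn
  rw [add_zero, Real.Gamma_nat_eq_factorial, sub_zero] at this
  rw [← div_div]
  calc _ ≤ C * (n : ℝ) ^ a / Real.Gamma (a + 1) * Real.exp ((1 + |b|) * c ^ 2 / 2) := by gcongr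
    _ = _ := by ring

/-- Lemma 2.6: bounds for the generalised Dirichlet kernel near the endpoints:
for `α,β > −1/2` and fixed `c⁽¹⁾ > 0`,
i) `|v_L^{(α,β)}(1,cos θ)| ≤ C L^{2α+2}` for `0 ≤ θ ≤ c⁽¹⁾/L`, and
ii) `|v_L^{(α,β)}(1,cos θ)| ≤ C L^{α+β+1}` for `π − c⁽¹⁾/L ≤ θ ≤ π`. -/
theorem dirichletJ_endpoint_bounds (α β : ℝ)
    (hα : -(1 / 2 : ℝ) < α) (hβ : -(1 / 2 : ℝ) < β)
    (c₁ : ℝ) (hc₁ : 0 < c₁) :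
    ∃ C : ℝ, 0 < C ∧
      ∀ L : ℕ, 1 ≤ L →
        (∀ θ : ℝ, 0 ≤ θ → θ ≤ c₁ / (L : ℝ) →
          |dirichletJ α β L 1 (Real.cos θ)| ≤ C * (L : ℝ) ^ (2 * α + 2)) ∧
        (∀ θ : ℝ, Real.pi - c₁ / (L : ℝ) ≤ θ → θ ≤ Real.pi →
          |dirichletJ α β L 1 (Real.cos θ)| ≤ C * (L : ℝ) ^ (α + β + 1)) := by
  obtain ⟨C1, hC1, H1⟩ := jacobiP_bound' (α + 1) β (by linarith) hβ c₁
  obtain ⟨C2, hC2, H2⟩ := jacobiP_bound' β (α + 1) hβ (by linarith) c₁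
  obtain ⟨C3, hC3, H3⟩ := Gamma_ratio (α + β + 1) β (by linarith) (by linarith)
  have g := (Real.Gamma_pos_of_pos (show 0 < α + 1 by linarith))
  have h2 : 0 < (2 : ℝ) ^ (α + β + 1) := Real.rpow_pos_of_pos (by norm_num) _
  set D := ((2 : ℝ) ^ (α + β + 1))⁻¹ * (C3 / Real.Gamma (α + 1)) with hD
  have hDp : 0 < D := by positivity
  have key : ∀ L : ℕ, 1 ≤ L → ∀ x B : ℝ, |jacobiP (α + 1) β L x| ≤ B →
      |dirichletJ α β L 1 x| ≤ D * (L : ℝ) ^ (α + 1) * B := by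
    intro L hL x B hB
    have hL' : (0 : ℝ) < L := by exact_mod_cast hL
    have g1 := (Real.Gamma_pos_of_pos (show 0 < (L : ℝ) + α + β + 2 by linarith))
    have g2 := (Real.Gamma_pos_of_pos (show 0 < (L : ℝ) + β + 1 by linarith))
    have h3 := H3 L hL
    rw [show (L : ℝ) + (α + β + 1) + 1 = L + α + β + 2 by ring,
      show α + β + 1 - β = α + 1 by ring] at h3
    rw [dirichlet_closed α β hα hβ, abs_mul, abs_of_pos (by positivity)]
    refine mul_le_mul ?_ hB (abs_nonneg _) (by positivity)
    calc _ = ((2 : ℝ) ^ (α + β + 1))⁻¹ * (Real.Gamma ((L : ℝ) + α + β + 2) /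
          Real.Gamma ((L : ℝ) + β + 1) / Real.Gamma (α + 1)) := by field_simp
      _ ≤ ((2 : ℝ) ^ (α + β + 1))⁻¹ * (C3 * (L : ℝ) ^ (α + 1) / Real.Gamma (α + 1)) := by gcongr
      _ = _ := by rw [hD]; ring
  refine ⟨D * (C1 + C2), by positivity, fun L hL => ?_⟩
  have hL' : (0 : ℝ) < L := by exact_mod_cast hL
  constructor
  · intro θ h0 h1
    refine (key L hL _ _ (H1 L hL θ h0 h1)).trans ?_
    rw [show 2 * α + 2 = (α + 1) + (α + 1) by ring, Real.rpow_add hL' (α + 1) (α + 1)]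
    have r := Real.rpow_pos_of_pos hL' (α + 1)
    calc _ = D * C1 * ((L : ℝ) ^ (α + 1) * (L : ℝ) ^ (α + 1)) := by ring
      _ ≤ _ := by gcongr; linarith
  · intro θ h0 h1
    have hx : Real.cos θ = -Real.cos (Real.pi - θ) := by rw [Real.cos_pi_sub]; ring
    have hb := H2 L hL (Real.pi - θ) (by linarith) (by linarith)
    have hb' : |jacobiP (α + 1) β L (Real.cos θ)| ≤ C2 * (L : ℝ) ^ β := by
      rw [hx, jacobiP_neg, abs_mul, abs_pow, abs_neg, abs_one, one_pow, one_mul]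
      exact hb
    refine (key L hL _ _ hb').trans ?_
    rw [show α + β + 1 = (α + 1) + β by ring, Real.rpow_add hL' (α + 1) β]
    have r := Real.rpow_pos_of_pos hL' (α + 1)
    have r' := Real.rpow_pos_of_pos hL' β
    calc _ = D * C2 * ((L : ℝ) ^ (α + 1) * (L : ℝ) ^ β) := by ring
      _ ≤ _ := by gcongr; linarith
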